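/- arXiv:1510.06785 — 5 statements merged into one kernel-verified Lean document; each statement's English description precedes it below -/
import Mathlib

section
/- For every nonnegative weight vector w ∈ ℝ^N with Σᵢ wᵢ = c, the algebraic connectivity of the supra-Laplacian satisfies λ₂(L(w)) ≤ 2c/N. (Hence the optimal value F(c) of the budget-constrained weight design problem is at most 2c/N.) -/
open Matrix

/-- The supra-Laplacian of a two-layer multiplex with layer Laplacians `L₁`, `L₂`
and one-to-one inter-layer weights `w`: the block matrix
`[[L₁ + W, −W], [−W, L₂ + W]]` with `W = diag w`. -/
noncomputable def supraLaplacian {N : ℕ} (L₁ L₂ : Matrix (Fin N) (Fin N) ℝ)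
    (w : Fin N → ℝ) : Matrix (Fin N ⊕ Fin N) (Fin N ⊕ Fin N) ℝ :=
  Matrix.fromBlocks (L₁ + Matrix.diagonal w) (-Matrix.diagonal w)
    (-Matrix.diagonal w) (L₂ + Matrix.diagonal w)

/-- Algebraic connectivity: the minimum of `vᵀ M v` over unit vectors `v`
orthogonal to the all-ones vector (the minimum is attained, so it equals the inf). -/
noncomputable def lambda2 {n : Type*} [Fintype n] (M : Matrix n n ℝ) : ℝ :=
  sInf {x : ℝ | ∃ v : n → ℝ, v ⬝ᵥ v = 1 ∧ v ⬝ᵥ (fun _ => 1) = 0 ∧ x = v ⬝ᵥ M *ᵥ v}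

/-! The infimum `λ₂(M)` is a lower bound for the Rayleigh quotients of `M` on the nonzero vectors
orthogonal to `𝟙`, the values at unit vectors being bounded below by compactness. The vector
`(𝟙, -𝟙)` has squared length `2N`, is orthogonal to the all-ones vector, and
`(𝟙, -𝟙)ᵀ L(w) (𝟙, -𝟙) = 𝟙ᵀ L₁ 𝟙 + 𝟙ᵀ L₂ 𝟙 + 4 ∑ᵢ wᵢ`, where the first two terms vanish for
Laplacians. -/

section AlgebraicConnectivity

variable {n : Type*} [Fintype n]

theorem norm_le_sqrt_dotProduct_self (v : n → ℝ) : ‖v‖ ≤ √(v ⬝ᵥ v) := by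
  refine (pi_norm_le_iff_of_nonneg (Real.sqrt_nonneg _)).2 fun i => Real.abs_le_sqrt ?_
  calc
    v i ^ 2 = v i * v i := sq (v i)
    _ ≤ v ⬝ᵥ v :=
      Finset.single_le_sum (f := fun j => v j * v j) (fun j _ => mul_self_nonneg (v j))
        (Finset.mem_univ i)

theorem bddBelow_dotProduct_mulVec_self_image_closedBall (M : Matrix n n ℝ) (r : ℝ) :
    BddBelow ((fun v : n → ℝ => v ⬝ᵥ M *ᵥ v) '' Metric.closedBall 0 r) :=
  (isCompact_closedBall 0 r).bddBelow_image (by fun_prop)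

theorem lambda2_le_dotProduct_mulVec (M : Matrix n n ℝ) {v : n → ℝ}
    (hv : v ⬝ᵥ v = 1) (hv1 : v ⬝ᵥ 1 = 0) : lambda2 M ≤ v ⬝ᵥ M *ᵥ v := by
  refine csInf_le ((bddBelow_dotProduct_mulVec_self_image_closedBall M 1).mono ?_)
    ⟨v, hv, hv1, rfl⟩
  rintro _ ⟨u, hu, -, rfl⟩
  have hnorm : ‖u‖ ≤ 1 := by simpa only [hu, Real.sqrt_one] using norm_le_sqrt_dotProduct_self u
  exact ⟨u, mem_closedBall_zero_iff.2 hnorm, rfl⟩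

theorem lambda2_le_dotProduct_mulVec_div_dotProduct_self (M : Matrix n n ℝ) {v : n → ℝ}
    (hv : v ≠ 0) (hv1 : v ⬝ᵥ 1 = 0) : lambda2 M ≤ (v ⬝ᵥ M *ᵥ v) / (v ⬝ᵥ v) := by
  have hpos : 0 < v ⬝ᵥ v := by simpa using dotProduct_star_self_pos_iff.2 hv
  obtain ⟨t, ht⟩ : ∃ t : ℝ, t * t = (v ⬝ᵥ v)⁻¹ :=
    ⟨√(v ⬝ᵥ v)⁻¹, Real.mul_self_sqrt (inv_nonneg.2 hpos.le)⟩
  have hunit : (t • v) ⬝ᵥ (t • v) = 1 := by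
    rw [smul_dotProduct, dotProduct_smul, smul_smul, ht, smul_eq_mul, inv_mul_cancel₀ hpos.ne']
  have horth : (t • v) ⬝ᵥ 1 = 0 := by rw [smul_dotProduct, hv1, smul_zero]
  calc
    lambda2 M ≤ (t • v) ⬝ᵥ M *ᵥ (t • v) := lambda2_le_dotProduct_mulVec M hunit horth
    _ = (v ⬝ᵥ M *ᵥ v) / (v ⬝ᵥ v) := by
      rw [mulVec_smul, smul_dotProduct, dotProduct_smul, smul_smul, ht, smul_eq_mul,
        inv_mul_eq_div]

end AlgebraicConnectivity

theorem sum_mul_sub_sq_eq_dotProduct_diagonal_mulVec {n R : Type*} [Fintype n] [DecidableEq n]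
    [CommRing R] (w a b : n → R) :
    ∑ i, w i * (a i - b i) ^ 2 = (a - b) ⬝ᵥ diagonal w *ᵥ (a - b) := by
  simp only [dotProduct, mulVec_diagonal, Pi.sub_apply]
  exact Finset.sum_congr rfl fun i _ => by ring

section SupraLaplacian

variable {N : ℕ} (L₁ L₂ : Matrix (Fin N) (Fin N) ℝ) (w : Fin N → ℝ)

theorem sumElim_dotProduct_supraLaplacian_mulVec (a b : Fin N → ℝ) :
    Sum.elim a b ⬝ᵥ supraLaplacian L₁ L₂ w *ᵥ Sum.elim a b =
      a ⬝ᵥ L₁ *ᵥ a + b ⬝ᵥ L₂ *ᵥ b + ∑ i, w i * (a i - b i) ^ 2 := by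
  rw [sum_mul_sub_sq_eq_dotProduct_diagonal_mulVec, supraLaplacian, fromBlocks_mulVec,
    sumElim_dotProduct_sumElim]
  simp only [Sum.elim_comp_inl, Sum.elim_comp_inr, add_mulVec, neg_mulVec, mulVec_sub,
    sub_dotProduct, dotProduct_add, dotProduct_sub, dotProduct_neg]
  ring

theorem sumElim_one_neg_one_dotProduct_supraLaplacian_mulVec :
    Sum.elim 1 (-1) ⬝ᵥ supraLaplacian L₁ L₂ w *ᵥ Sum.elim 1 (-1) =
      1 ⬝ᵥ L₁ *ᵥ 1 + 1 ⬝ᵥ L₂ *ᵥ 1 + 4 * ∑ i, w i := by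
  have hsq : ((1 : ℝ) - -1) ^ 2 = 4 := by norm_num
  simp only [sumElim_dotProduct_supraLaplacian_mulVec, mulVec_neg, neg_dotProduct_neg,
    Pi.one_apply, Pi.neg_apply, hsq, ← Finset.sum_mul, mul_comm]

end SupraLaplacian

theorem stmt1_general {N : ℕ} (hN : 1 ≤ N) (L₁ L₂ : Matrix (Fin N) (Fin N) ℝ)
    (w : Fin N → ℝ) :
    lambda2 (supraLaplacian L₁ L₂ w) ≤
      2 * (∑ i, w i) / N + (1 ⬝ᵥ L₁ *ᵥ 1 + 1 ⬝ᵥ L₂ *ᵥ 1) / (2 * N) := by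
  let v : Fin N ⊕ Fin N → ℝ := Sum.elim 1 (-1)
  have hv : v ≠ 0 := fun h => one_ne_zero (congrFun h (Sum.inl ⟨0, hN⟩))
  have horth : v ⬝ᵥ 1 = 0 := by simp [v, dotProduct]
  have hself : v ⬝ᵥ v = 2 * N := by simp [v, two_mul]
  calc
    lambda2 (supraLaplacian L₁ L₂ w) ≤ (v ⬝ᵥ supraLaplacian L₁ L₂ w *ᵥ v) / (v ⬝ᵥ v) :=
      lambda2_le_dotProduct_mulVec_div_dotProduct_self _ hv horth
    _ = (1 ⬝ᵥ L₁ *ᵥ 1 + 1 ⬝ᵥ L₂ *ᵥ 1 + 4 * ∑ i, w i) / (2 * N) := by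
      rw [sumElim_one_neg_one_dotProduct_supraLaplacian_mulVec, hself]
    _ = 2 * (∑ i, w i) / N + (1 ⬝ᵥ L₁ *ᵥ 1 + 1 ⬝ᵥ L₂ *ᵥ 1) / (2 * N) := by
      ring

theorem stmt1 {N : ℕ} (hN : 1 ≤ N)
    (L₁ L₂ : Matrix (Fin N) (Fin N) ℝ)
    (hL₁ : L₁.PosSemidef) (hL₂ : L₂.PosSemidef)
    (hL₁1 : L₁ *ᵥ (fun _ => 1) = 0) (hL₂1 : L₂ *ᵥ (fun _ => 1) = 0)
    (w : Fin N → ℝ) (hw : ∀ i, 0 ≤ w i) (c : ℝ) (hc : c = ∑ i, w i) :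
    lambda2 (supraLaplacian L₁ L₂ w) ≤ 2 * c / N := by
  simpa [Pi.one_def, hL₁1, hL₂1, hc] using stmt1_general hN L₁ L₂ w
end

section
/- Let c ≥ 0 and consider the uniform weights w = (c/N)𝟙. For any α ∈ ℝ and any u₁, u₂ ∈ ℝ^N with u₁ᵀ𝟙 = u₂ᵀ𝟙 = 0, the vector v = (α𝟙 + u₁, −α𝟙 + u₂) ∈ ℝ^{2N} satisfies the identity vᵀ L(w) v − (2c/N)‖v‖² = u₁ᵀL₁u₁ + u₂ᵀL₂u₂ − (c/N)‖u₁ + u₂‖². -/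
open Matrix

/-!
For a coupling block `D`, expanding the quadratic form at `(x, y)` gives the layer energies
`x ⬝ᵥ L₁ *ᵥ x + y ⬝ᵥ L₂ *ᵥ y` plus the `D`-energy of `x - y`. By the parallelogram law the latter
is twice the sum of the `D`-energies of `x` and `y`, minus the `D`-energy of `x + y`. If `z` lies in
the left and right kernels of both layers, then taking `x = z + u₁` and `y = -z + u₂` changes
neither layer energy, and `z` cancels in `x + y`.
-/

section

variable {m n R : Type*} [Fintype n]

theorem mulVec_const_eq_zero [NonAssocSemiring R] {A : Matrix m n R}
    (hA : A *ᵥ (fun _ => 1) = 0) (a : R) : A *ᵥ (fun _ => a) = 0 := by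
  ext i
  have row_sum : ∑ j, A i j = 0 := by
    simpa only [mulVec, dotProduct, mul_one, Pi.zero_apply] using congrFun hA i
  simp only [mulVec, dotProduct, ← Finset.sum_mul, row_sum, zero_mul, Pi.zero_apply]

theorem vecMul_const_eq_zero_of_isSymm [CommSemiring R] {A : Matrix n n R}
    (hsymm : A.IsSymm) (hA : A *ᵥ (fun _ => 1) = 0) (a : R) : (fun _ => a) ᵥ* A = 0 := by
  rw [← mulVec_transpose, hsymm.eq, mulVec_const_eq_zero hA]

theorem add_dotProduct_mulVec_add_of_kernel [NonUnitalSemiring R] {A : Matrix n n R} {z : n → R}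
    (hright : A *ᵥ z = 0) (hleft : z ᵥ* A = 0) (u : n → R) :
    (z + u) ⬝ᵥ A *ᵥ (z + u) = u ⬝ᵥ A *ᵥ u := by
  rw [mulVec_add, hright, zero_add, add_dotProduct, dotProduct_mulVec z, hleft, zero_dotProduct,
    zero_add]

theorem dotProduct_mulVec_parallelogram [NonUnitalNonAssocRing R] (D : Matrix n n R)
    (x y : n → R) :
    (x + y) ⬝ᵥ D *ᵥ (x + y) + (x - y) ⬝ᵥ D *ᵥ (x - y) =
      2 • (x ⬝ᵥ D *ᵥ x + y ⬝ᵥ D *ᵥ y) := by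
  simp only [mulVec_add, mulVec_sub, dotProduct_add, dotProduct_sub, add_dotProduct, sub_dotProduct]
  abel

theorem dotProduct_fromBlocks_coupling_mulVec [NonUnitalNonAssocRing R] (A B D : Matrix n n R)
    (x y : n → R) :
    Sum.elim x y ⬝ᵥ fromBlocks (A + D) (-D) (-D) (B + D) *ᵥ Sum.elim x y =
      x ⬝ᵥ A *ᵥ x + y ⬝ᵥ B *ᵥ y + (x - y) ⬝ᵥ D *ᵥ (x - y) := by
  simp only [fromBlocks_mulVec, sumElim_dotProduct_sumElim, Sum.elim_comp_inl, Sum.elim_comp_inr,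
    add_mulVec, neg_mulVec, mulVec_sub, dotProduct_add, dotProduct_neg, dotProduct_sub,
    sub_dotProduct]
  abel

theorem dotProduct_fromBlocks_zero_mulVec [NonUnitalNonAssocSemiring R] (A B : Matrix n n R)
    (x y : n → R) :
    Sum.elim x y ⬝ᵥ fromBlocks A 0 0 B *ᵥ Sum.elim x y = x ⬝ᵥ A *ᵥ x + y ⬝ᵥ B *ᵥ y := by
  simp only [fromBlocks_mulVec, sumElim_dotProduct_sumElim, Sum.elim_comp_inl, Sum.elim_comp_inr,
    zero_mulVec, add_zero, zero_add]

theorem stmt5_general [Ring R] {L₁ L₂ : Matrix n n R} {z : n → R}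
    (hL₁z : L₁ *ᵥ z = 0) (hzL₁ : z ᵥ* L₁ = 0) (hL₂z : L₂ *ᵥ z = 0) (hzL₂ : z ᵥ* L₂ = 0)
    (D : Matrix n n R) (u₁ u₂ : n → R) (v : n ⊕ n → R) (hv : v = Sum.elim (z + u₁) (-z + u₂)) :
    v ⬝ᵥ fromBlocks (L₁ + D) (-D) (-D) (L₂ + D) *ᵥ v - 2 * (v ⬝ᵥ fromBlocks D 0 0 D *ᵥ v) =
      u₁ ⬝ᵥ L₁ *ᵥ u₁ + u₂ ⬝ᵥ L₂ *ᵥ u₂ - (u₁ + u₂) ⬝ᵥ D *ᵥ (u₁ + u₂) := by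
  have layer₁ := add_dotProduct_mulVec_add_of_kernel hL₁z hzL₁ u₁
  have layer₂ : (-z + u₂) ⬝ᵥ L₂ *ᵥ (-z + u₂) = u₂ ⬝ᵥ L₂ *ᵥ u₂ :=
    add_dotProduct_mulVec_add_of_kernel (by rw [mulVec_neg, hL₂z, neg_zero])
      (by rw [neg_vecMul, hzL₂, neg_zero]) u₂
  have sum_eq : (z + u₁) + (-z + u₂) = u₁ + u₂ := by abel
  have parallelogram := dotProduct_mulVec_parallelogram D (z + u₁) (-z + u₂)
  rw [sum_eq, two_nsmul, ← two_mul] at parallelogram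
  rw [hv, dotProduct_fromBlocks_coupling_mulVec, dotProduct_fromBlocks_zero_mulVec,
    layer₁, layer₂, ← parallelogram]
  abel

end

theorem stmt5 {N : ℕ} (hN : 1 ≤ N)
    (L₁ L₂ : Matrix (Fin N) (Fin N) ℝ)
    (hL₁ : L₁.PosSemidef) (hL₂ : L₂.PosSemidef)
    (hL₁1 : L₁ *ᵥ (fun _ => 1) = 0) (hL₂1 : L₂ *ᵥ (fun _ => 1) = 0)
    (c : ℝ) (hc : 0 ≤ c)
    (α : ℝ) (u₁ u₂ : Fin N → ℝ)
    (hu₁ : u₁ ⬝ᵥ (fun _ => 1) = 0) (hu₂ : u₂ ⬝ᵥ (fun _ => 1) = 0)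
    (v : Fin N ⊕ Fin N → ℝ)
    (hv : v = Sum.elim (fun i => α + u₁ i) (fun i => -α + u₂ i)) :
    v ⬝ᵥ (supraLaplacian L₁ L₂ (fun _ => c / N)) *ᵥ v - (2 * c / N) * (v ⬝ᵥ v) =
      u₁ ⬝ᵥ L₁ *ᵥ u₁ + u₂ ⬝ᵥ L₂ *ᵥ u₂ - (c / N) * ((u₁ + u₂) ⬝ᵥ (u₁ + u₂)) := by
  have uniform := stmt5_general
    (mulVec_const_eq_zero hL₁1 α)
    (vecMul_const_eq_zero_of_isSymm (isHermitian_iff_isSymm.mp hL₁.isHermitian) hL₁1 α)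
    (mulVec_const_eq_zero hL₂1 α)
    (vecMul_const_eq_zero_of_isSymm (isHermitian_iff_isSymm.mp hL₂.isHermitian) hL₂1 α)
    (diagonal fun _ => c / N) u₁ u₂ v hv
  simpa only [supraLaplacian, fromBlocks_diagonal, Sum.elim_lam_const_lam_const,
    diagonal_const_mulVec, dotProduct_smul, smul_eq_mul, ← mul_assoc, ← mul_div_assoc]
    using uniform
end

section
/- Let c ≥ 0. There exists a nonnegative weight vector w ∈ ℝ^N with Σᵢ wᵢ = c and λ₂(L(w)) = 2c/N if and only if for all u₁, u₂ ∈ ℝ^N with u₁ᵀ𝟙 = u₂ᵀ𝟙 = 0 one has u₁ᵀL₁u₁ + u₂ᵀL₂u₂ ≥ (c/N)‖u₁ + u₂‖² (i.e., if and only if c is at most the threshold budget c* = N · inf{(u₁ᵀL₁u₁ + u₂ᵀL₂u₂)/‖u₁+u₂‖² : u₁ᵀ𝟙 = u₂ᵀ𝟙 = 0, u₁ + u₂ ≠ 0}). -/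
open Matrix

/-! The vector `e = (𝟙, -𝟙)` is orthogonal to `𝟙` and its Rayleigh quotient for `L(w)` is `2c/N`,
whatever the weights `w` of total `c`. Hence `λ₂(L(w)) = 2c/N` says exactly that `e` minimises the
Rayleigh quotient on `𝟙ᗮ`. A minimiser is an eigenvector, and `L(w) e = (2w, -2w)`, so the weights
are then uniform. For uniform weights `k = c/N` the parallelogram law
`k‖x - y‖² = 2k(‖x‖² + ‖y‖²) - k‖x + y‖²` turns minimality of `e` into the inequality
`k‖x + y‖² ≤ xᵀL₁x + yᵀL₂y` on the pairs `(x, y) ⟂ 𝟙`; neither side changes under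
`(x, y) ↦ (x - a𝟙, y + a𝟙)`, so `x` and `y` may be taken orthogonal to `𝟙` separately. -/

section DotProduct

variable {n : Type*} [Fintype n]

lemma sumElim_dotProduct_one {m R : Type*} [Fintype m] [NonAssocSemiring R] (x : m → R)
    (y : n → R) : (x ⊕ᵥ y) ⬝ᵥ 1 = x ⬝ᵥ 1 + y ⬝ᵥ 1 := by
  simp only [dotProduct_one, Fintype.sum_sum_type, Sum.elim_inl, Sum.elim_inr]

lemma sub_dotProduct_sub_self {R : Type*} [NonAssocRing R] (x y : n → R) :
    (x - y) ⬝ᵥ (x - y) = 2 * (x ⬝ᵥ x + y ⬝ᵥ y) - (x + y) ⬝ᵥ (x + y) := by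
  simp only [sub_dotProduct, dotProduct_sub, add_dotProduct, dotProduct_add, two_mul]
  abel

lemma add_dotProduct_mulVec_add_of_mulVec_eq_zero {R : Type*} [NonUnitalSemiring R]
    {A : Matrix n n R} {z : n → R} (hAz : A *ᵥ z = 0) (hzA : z ᵥ* A = 0) (x : n → R) :
    (x + z) ⬝ᵥ A *ᵥ (x + z) = x ⬝ᵥ A *ᵥ x := by
  rw [mulVec_add, hAz, add_zero, add_dotProduct, dotProduct_mulVec z, hzA, zero_dotProduct,
    add_zero]

lemma one_vecMul_of_isHermitian {R : Type*} [Semiring R] [StarRing R] {A : Matrix n n R}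
    (hA : A.IsHermitian) (hA1 : A *ᵥ 1 = 0) : 1 ᵥ* A = 0 := by
  rw [← hA.eq, ← star_one, ← star_mulVec, hA1, star_zero]

lemma mulVec_eq_smul_of_forall_le {K : Type*} [Field K] [LinearOrder K] [IsStrictOrderedRing K]
    {M : Matrix n n K} {e u : n → K} {μ : K} (hM : e ᵥ* M = M *ᵥ e)
    (he : e ⬝ᵥ u = 0) (hMe : M *ᵥ e ⬝ᵥ u = 0) (hval : e ⬝ᵥ M *ᵥ e = μ * (e ⬝ᵥ e))
    (hmin : ∀ v, v ⬝ᵥ u = 0 → μ * (v ⬝ᵥ v) ≤ v ⬝ᵥ M *ᵥ v) :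
    M *ᵥ e = μ • e := by
  -- Perturb `e` in the admissible direction `z`; the linear term in `t` is `2 (z ⬝ᵥ z) t`.
  set z := M *ᵥ e - μ • e with hz
  have hzu : z ⬝ᵥ u = 0 := by simp [hz, sub_dotProduct, he, hMe]
  have hzz : z ⬝ᵥ z = z ⬝ᵥ M *ᵥ e - μ * (z ⬝ᵥ e) := by
    conv_lhs => rw [hz, dotProduct_sub, dotProduct_smul, smul_eq_mul, ← hz]
  have hexpand (t : K) :
      0 ≤ (z ⬝ᵥ M *ᵥ z - μ * (z ⬝ᵥ z)) * (t * t) + 2 * (z ⬝ᵥ z) * t + 0 := by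
    have h := hmin (e + t • z) (by simp [add_dotProduct, he, hzu])
    have hcross : e ⬝ᵥ M *ᵥ z = z ⬝ᵥ M *ᵥ e := by
      rw [dotProduct_mulVec, hM, dotProduct_comm]
    simp only [mulVec_add, mulVec_smul, add_dotProduct, dotProduct_add, smul_dotProduct,
      dotProduct_smul, smul_eq_mul, hcross, hval, dotProduct_comm e z] at h
    linear_combination h - 2 * t * hzz
  have hdiscrim := discrim_le_zero hexpand
  have hzz0 : z ⬝ᵥ z = 0 := by
    rw [discrim, mul_zero, sub_zero] at hdiscrim
    simpa using le_antisymm hdiscrim (sq_nonneg _)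
  exact sub_eq_zero.1 (dotProduct_self_eq_zero.1 hzz0)

end DotProduct

section AlgebraicConnectivity

variable {n : Type*} [Fintype n] (M : Matrix n n ℝ)

lemma bddBelow_image_dotProduct_mulVec :
    BddBelow ((fun v : n → ℝ => v ⬝ᵥ M *ᵥ v) '' {v | v ⬝ᵥ v = 1}) := by
  have hcont : Continuous fun v : n → ℝ => v ⬝ᵥ M *ᵥ v := by fun_prop
  refine ((isCompact_Icc (a := (-1 : n → ℝ)) (b := 1)).image hcont).bddBelow.mono
    (Set.image_mono fun v (hv : v ⬝ᵥ v = 1) => ?_)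
  have hcoord (i : n) : |v i| ≤ 1 := by
    rw [abs_le_one_iff_mul_self_le_one, ← hv]
    exact Finset.single_le_sum (f := fun j => v j * v j) (fun j _ => mul_self_nonneg (v j))
      (Finset.mem_univ i)
  exact ⟨fun i => (abs_le.1 (hcoord i)).1, fun i => (abs_le.1 (hcoord i)).2⟩

lemma exists_sq_mul_dotProduct_self_eq_one {v : n → ℝ} (hv : v ≠ 0) :
    ∃ s : ℝ, s ^ 2 * (v ⬝ᵥ v) = 1 := by
  have hpos : 0 < v ⬝ᵥ v := by simpa using dotProduct_self_star_pos_iff.2 hv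
  exact ⟨√(v ⬝ᵥ v)⁻¹, by rw [Real.sq_sqrt (by positivity), inv_mul_cancel₀ hpos.ne']⟩

lemma lambda2_mul_dotProduct_self_le {v : n → ℝ} (hv : v ⬝ᵥ 1 = 0) :
    lambda2 M * (v ⬝ᵥ v) ≤ v ⬝ᵥ M *ᵥ v := by
  rcases eq_or_ne v 0 with rfl | hv0
  · simp
  obtain ⟨s, hs⟩ := exists_sq_mul_dotProduct_self_eq_one hv0
  have hle : lambda2 M ≤ s ^ 2 * (v ⬝ᵥ M *ᵥ v) := by
    refine csInf_le ((bddBelow_image_dotProduct_mulVec M).mono ?_) ⟨s • v, ?_, ?_, ?_⟩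
    · rintro _ ⟨v, hv, -, rfl⟩
      exact ⟨v, hv, rfl⟩
    · simp [← hs, sq, mul_assoc]
    · exact (smul_dotProduct s v 1).trans (by rw [hv, smul_zero])
    · simp [mulVec_smul, sq, mul_assoc]
  have hvv : 0 ≤ v ⬝ᵥ v := by simpa using dotProduct_star_self_nonneg v
  calc lambda2 M * (v ⬝ᵥ v) ≤ s ^ 2 * (v ⬝ᵥ M *ᵥ v) * (v ⬝ᵥ v) := by gcongr
    _ = v ⬝ᵥ M *ᵥ v := by linear_combination (v ⬝ᵥ M *ᵥ v) * hs

variable {M}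

lemma lambda2_eq_iff_forall_le {e : n → ℝ} {μ : ℝ} (he0 : e ≠ 0) (he : e ⬝ᵥ 1 = 0)
    (hval : e ⬝ᵥ M *ᵥ e = μ * (e ⬝ᵥ e)) :
    lambda2 M = μ ↔ ∀ v, v ⬝ᵥ 1 = 0 → μ * (v ⬝ᵥ v) ≤ v ⬝ᵥ M *ᵥ v := by
  refine ⟨fun h v hv => h ▸ lambda2_mul_dotProduct_self_le M hv, fun hmin => ?_⟩
  obtain ⟨s, hs⟩ := exists_sq_mul_dotProduct_self_eq_one he0
  refine IsLeast.csInf_eq ⟨⟨s • e, ?_, ?_, ?_⟩, ?_⟩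
  · simp [← hs, sq, mul_assoc]
  · exact (smul_dotProduct s e 1).trans (by rw [he, smul_zero])
  · simp only [mulVec_smul, smul_dotProduct, dotProduct_smul, smul_eq_mul, hval]
    linear_combination -μ * hs
  · rintro _ ⟨v, hv, hv1, rfl⟩
    simpa [hv] using hmin v hv1

end AlgebraicConnectivity

section Multiplex

variable {ι R : Type*} [DecidableEq ι]

/-- The supra-Laplacian of a two-layer multiplex over an arbitrary finite node set `ι` and arbitrary
coefficients; for `ι = Fin N` and real coefficients it is `supraLaplacian` by definition. -/
def multiplexLaplacian [AddGroup R] (L₁ L₂ : Matrix ι ι R) (w : ι → R) :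
    Matrix (ι ⊕ ι) (ι ⊕ ι) R :=
  fromBlocks (L₁ + diagonal w) (-diagonal w) (-diagonal w) (L₂ + diagonal w)

variable [Fintype ι]

lemma dotProduct_multiplexLaplacian_mulVec [Ring R] (L₁ L₂ : Matrix ι ι R) (w x y : ι → R) :
    (x ⊕ᵥ y) ⬝ᵥ multiplexLaplacian L₁ L₂ w *ᵥ (x ⊕ᵥ y) =
      x ⬝ᵥ L₁ *ᵥ x + y ⬝ᵥ L₂ *ᵥ y + (x - y) ⬝ᵥ diagonal w *ᵥ (x - y) := by
  simp only [multiplexLaplacian, fromBlocks_mulVec, Sum.elim_comp_inl, Sum.elim_comp_inr,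
    sumElim_dotProduct_sumElim, add_mulVec, neg_mulVec, mulVec_sub, dotProduct_add,
    dotProduct_sub, sub_dotProduct, dotProduct_neg]
  abel

variable [Ring R] {L₁ L₂ : Matrix ι ι R}

lemma multiplexLaplacian_mulVec_one_neg_one (h₁ : L₁ *ᵥ 1 = 0) (h₂ : L₂ *ᵥ 1 = 0) (w : ι → R) :
    multiplexLaplacian L₁ L₂ w *ᵥ (1 ⊕ᵥ -1) = (2 * w) ⊕ᵥ -(2 * w) := by
  have hw : diagonal w *ᵥ 1 = w := by ext i; simp [mulVec_diagonal]
  simp only [multiplexLaplacian, fromBlocks_mulVec, Sum.elim_comp_inl, Sum.elim_comp_inr,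
    add_mulVec, neg_mulVec, mulVec_neg, h₁, h₂, hw, neg_neg, zero_add, two_mul, neg_add]

lemma one_neg_one_vecMul_multiplexLaplacian (h₁ : 1 ᵥ* L₁ = 0) (h₂ : 1 ᵥ* L₂ = 0) (w : ι → R) :
    (1 ⊕ᵥ -1) ᵥ* multiplexLaplacian L₁ L₂ w = (2 * w) ⊕ᵥ -(2 * w) := by
  have hw : 1 ᵥ* diagonal w = w := by ext i; simp [vecMul_diagonal]
  simp only [multiplexLaplacian, vecMul_fromBlocks, Sum.elim_comp_inl, Sum.elim_comp_inr,
    vecMul_add, vecMul_neg, neg_vecMul, h₁, h₂, hw, neg_neg, zero_add, neg_zero, two_mul, neg_add]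

lemma one_neg_one_dotProduct_multiplexLaplacian_mulVec {R : Type*} [CommRing R]
    {L₁ L₂ : Matrix ι ι R} (h₁ : L₁ *ᵥ 1 = 0) (h₂ : L₂ *ᵥ 1 = 0) {w : ι → R} {k : R}
    (hw : ∑ i, w i = Fintype.card ι * k) :
    (1 ⊕ᵥ -1) ⬝ᵥ multiplexLaplacian L₁ L₂ w *ᵥ (1 ⊕ᵥ -1) =
      2 * k * ((1 ⊕ᵥ -1 : ι ⊕ ι → R) ⬝ᵥ (1 ⊕ᵥ -1)) := by
  rw [multiplexLaplacian_mulVec_one_neg_one h₁ h₂]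
  simp only [sumElim_dotProduct_sumElim, neg_dotProduct_neg, one_dotProduct, Pi.mul_apply,
    Pi.ofNat_apply, ← Finset.mul_sum, hw, Finset.sum_const, Finset.card_univ,
    nsmul_eq_mul]
  ring

lemma two_mul_le_multiplexLaplacian_const_iff {R : Type*} [CommRing R] [LinearOrder R]
    [IsStrictOrderedRing R] (L₁ L₂ : Matrix ι ι R) (k : R) (x y : ι → R) :
    2 * k * ((x ⊕ᵥ y) ⬝ᵥ (x ⊕ᵥ y)) ≤
        (x ⊕ᵥ y) ⬝ᵥ multiplexLaplacian L₁ L₂ (fun _ => k) *ᵥ (x ⊕ᵥ y) ↔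
      k * ((x + y) ⬝ᵥ (x + y)) ≤ x ⬝ᵥ L₁ *ᵥ x + y ⬝ᵥ L₂ *ᵥ y := by
  have hdiag : (x - y) ⬝ᵥ diagonal (fun _ => k) *ᵥ (x - y) = k * ((x - y) ⬝ᵥ (x - y)) := by
    rw [← smul_one_eq_diagonal, smul_mulVec, one_mulVec, dotProduct_smul, smul_eq_mul]
  rw [dotProduct_multiplexLaplacian_mulVec, sumElim_dotProduct_sumElim, hdiag,
    sub_dotProduct_sub_self]
  constructor <;> intro h <;> linarith

end Multiplex

section AlgebraicConnectivityOfMultiplex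

variable {ι : Type*} [Fintype ι] [DecidableEq ι] [Nonempty ι] {L₁ L₂ : Matrix ι ι ℝ}

lemma lambda2_multiplexLaplacian_eq_iff_forall_le (h₁ : L₁ *ᵥ 1 = 0) (h₂ : L₂ *ᵥ 1 = 0)
    {w : ι → ℝ} {k : ℝ} (hw : ∑ i, w i = Fintype.card ι * k) :
    lambda2 (multiplexLaplacian L₁ L₂ w) = 2 * k ↔ ∀ v, v ⬝ᵥ 1 = 0 →
      2 * k * (v ⬝ᵥ v) ≤ v ⬝ᵥ multiplexLaplacian L₁ L₂ w *ᵥ v := by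
  have hne : (1 ⊕ᵥ -1 : ι ⊕ ι → ℝ) ≠ 0 := fun h =>
    one_ne_zero (congrFun h (.inl (Classical.arbitrary ι)))
  exact lambda2_eq_iff_forall_le hne (by simp [sumElim_dotProduct_one])
    (one_neg_one_dotProduct_multiplexLaplacian_mulVec h₁ h₂ hw)

lemma eq_const_of_lambda2_multiplexLaplacian_eq
    (h₁ : L₁ *ᵥ 1 = 0) (h₂ : L₂ *ᵥ 1 = 0) (h₁' : 1 ᵥ* L₁ = 0) (h₂' : 1 ᵥ* L₂ = 0)
    {w : ι → ℝ} {k : ℝ} (hw : ∑ i, w i = Fintype.card ι * k)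
    (hlam : lambda2 (multiplexLaplacian L₁ L₂ w) = 2 * k) : w = fun _ => k := by
  have hMe := multiplexLaplacian_mulVec_one_neg_one h₁ h₂ w
  have heigen : multiplexLaplacian L₁ L₂ w *ᵥ (1 ⊕ᵥ -1) =
      (2 * k) • (1 ⊕ᵥ -1 : ι ⊕ ι → ℝ) := by
    refine mulVec_eq_smul_of_forall_le (u := 1) ?_ ?_ ?_
      (one_neg_one_dotProduct_multiplexLaplacian_mulVec h₁ h₂ hw)
      ((lambda2_multiplexLaplacian_eq_iff_forall_le h₁ h₂ hw).1 hlam)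
    · rw [hMe, one_neg_one_vecMul_multiplexLaplacian h₁' h₂']
    · simp [sumElim_dotProduct_one]
    · simp [hMe, sumElim_dotProduct_one]
  funext i
  simpa [hMe] using congrFun heigen (.inl i)

lemma lambda2_multiplexLaplacian_const_eq_iff
    (h₁ : L₁ *ᵥ 1 = 0) (h₂ : L₂ *ᵥ 1 = 0) (h₁' : 1 ᵥ* L₁ = 0) (h₂' : 1 ᵥ* L₂ = 0) (k : ℝ) :
    lambda2 (multiplexLaplacian L₁ L₂ fun _ => k) = 2 * k ↔
      ∀ u₁ u₂ : ι → ℝ, u₁ ⬝ᵥ 1 = 0 → u₂ ⬝ᵥ 1 = 0 →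
        k * ((u₁ + u₂) ⬝ᵥ (u₁ + u₂)) ≤ u₁ ⬝ᵥ L₁ *ᵥ u₁ + u₂ ⬝ᵥ L₂ *ᵥ u₂ := by
  rw [lambda2_multiplexLaplacian_eq_iff_forall_le h₁ h₂ (by simp)]
  constructor
  · intro hmin u₁ u₂ hu₁ hu₂
    exact (two_mul_le_multiplexLaplacian_const_iff ..).1
      (hmin (u₁ ⊕ᵥ u₂) (by rw [sumElim_dotProduct_one, hu₁, hu₂, add_zero]))
  · intro H v hv
    obtain ⟨x, y, rfl⟩ : ∃ x y : ι → ℝ, v = x ⊕ᵥ y := ⟨_, _, (Sum.elim_comp_inl_inr v).symm⟩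
    rw [sumElim_dotProduct_one] at hv
    obtain ⟨a, hx⟩ : ∃ a, x ⬝ᵥ 1 = a * Fintype.card ι := ⟨x ⬝ᵥ 1 / Fintype.card ι, by field_simp⟩
    have hconst (b : ℝ) : (b • (1 : ι → ℝ)) ⬝ᵥ 1 = b * Fintype.card ι := by simp
    have h := H (x + (-a) • 1) (y + a • 1)
      (by rw [add_dotProduct, hconst, hx]; ring) (by rw [add_dotProduct, hconst]; linarith)
    have hshift {L : Matrix ι ι ℝ} (hL : L *ᵥ 1 = 0) (hL' : 1 ᵥ* L = 0) (b : ℝ) (z : ι → ℝ) :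
        (z + b • 1) ⬝ᵥ L *ᵥ (z + b • 1) = z ⬝ᵥ L *ᵥ z :=
      add_dotProduct_mulVec_add_of_mulVec_eq_zero (by rw [mulVec_smul, hL, smul_zero])
        (by rw [smul_vecMul, hL', smul_zero]) z
    have hsum : x + (-a) • 1 + (y + a • 1) = x + y := by rw [neg_smul]; abel
    rw [hshift h₁ h₁', hshift h₂ h₂', hsum] at h
    exact (two_mul_le_multiplexLaplacian_const_iff ..).2 h

end AlgebraicConnectivityOfMultiplex

theorem stmt6_general {ι : Type*} [Fintype ι] [DecidableEq ι] [Nonempty ι] {L₁ L₂ : Matrix ι ι ℝ}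
    (h₁ : L₁ *ᵥ 1 = 0) (h₂ : L₂ *ᵥ 1 = 0) (h₁' : 1 ᵥ* L₁ = 0) (h₂' : 1 ᵥ* L₂ = 0)
    {c : ℝ} (hc : 0 ≤ c) :
    (∃ w : ι → ℝ, (∀ i, 0 ≤ w i) ∧ ∑ i, w i = c ∧
        lambda2 (multiplexLaplacian L₁ L₂ w) = 2 * c / Fintype.card ι) ↔
      ∀ u₁ u₂ : ι → ℝ, u₁ ⬝ᵥ 1 = 0 → u₂ ⬝ᵥ 1 = 0 →
        u₁ ⬝ᵥ L₁ *ᵥ u₁ + u₂ ⬝ᵥ L₂ *ᵥ u₂ ≥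
          c / Fintype.card ι * ((u₁ + u₂) ⬝ᵥ (u₁ + u₂)) := by
  have hck : c = Fintype.card ι * (c / Fintype.card ι) := by field_simp
  rw [mul_div_assoc]
  refine Iff.trans ?_ (lambda2_multiplexLaplacian_const_eq_iff h₁ h₂ h₁' h₂' _)
  constructor
  · rintro ⟨w, -, hw, hlam⟩
    rwa [eq_const_of_lambda2_multiplexLaplacian_eq h₁ h₂ h₁' h₂' (hw.trans hck) hlam] at hlam
  · intro hlam
    exact ⟨fun _ => c / Fintype.card ι, fun _ => by positivity, by simpa using hck.symm, hlam⟩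

theorem stmt6 {N : ℕ} (hN : 1 ≤ N)
    (L₁ L₂ : Matrix (Fin N) (Fin N) ℝ)
    (hL₁ : L₁.PosSemidef) (hL₂ : L₂.PosSemidef)
    (hL₁1 : L₁ *ᵥ (fun _ => 1) = 0) (hL₂1 : L₂ *ᵥ (fun _ => 1) = 0)
    (c : ℝ) (hc : 0 ≤ c) :
    (∃ w : Fin N → ℝ, (∀ i, 0 ≤ w i) ∧ (∑ i, w i) = c ∧
        lambda2 (supraLaplacian L₁ L₂ w) = 2 * c / N) ↔
      (∀ u₁ u₂ : Fin N → ℝ, u₁ ⬝ᵥ (fun _ => 1) = 0 → u₂ ⬝ᵥ (fun _ => 1) = 0 →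
        u₁ ⬝ᵥ L₁ *ᵥ u₁ + u₂ ⬝ᵥ L₂ *ᵥ u₂ ≥ (c / N) * ((u₁ + u₂) ⬝ᵥ (u₁ + u₂))) := by
  have : Nonempty (Fin N) := Fin.pos_iff_nonempty.1 hN
  have h := stmt6_general hL₁1 hL₂1 (one_vecMul_of_isHermitian hL₁.1 hL₁1)
    (one_vecMul_of_isHermitian hL₂.1 hL₂1) hc
  rwa [Fintype.card_fin] at h
end

section
/- Assume N ≥ 2 and that the two layers are identical, L₁ = L₂ = L₀. Then (i) for all u₁, u₂ ∈ ℝ^N with u₁ᵀ𝟙 = u₂ᵀ𝟙 = 0 one has u₁ᵀL₀u₁ + u₂ᵀL₀u₂ ≥ (λ₂(L₀)/2)·‖u₁ + u₂‖², and (ii) there exist u₁, u₂ ∈ ℝ^N with u₁ᵀ𝟙 = u₂ᵀ𝟙 = 0 and u₁ + u₂ ≠ 0 for which equality holds. Equivalently, the threshold budget c* = N · inf{(u₁ᵀL₀u₁ + u₂ᵀL₀u₂)/‖u₁+u₂‖² : u₁ᵀ𝟙 = u₂ᵀ𝟙 = 0, u₁ + u₂ ≠ 0} equals (N/2)·λ₂(L₀).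 -/
open Matrix

/-! By the parallelogram law, `uᵀMu + vᵀMv` is half the sum of the energies `xᵀMx` of `x = u + v`
and `x = u - v`. When `u, v ⊥ 𝟙` and `λ₂(M) ≥ 0`, the first energy is at least `λ₂(M)‖u + v‖²` and
the second is nonnegative, with value `0` for `u = v`. Equality therefore holds when `u` and `v` are
the same minimizer of the energy over unit vectors orthogonal to `𝟙`, which exists by
compactness. -/

theorem dotProduct_mulVec_parallelogram_law {n R : Type*} [Fintype n]
    [NonUnitalNonAssocRing R] (M : Matrix n n R) (u v : n → R) :
    (u + v) ⬝ᵥ M *ᵥ (u + v) + (u - v) ⬝ᵥ M *ᵥ (u - v) =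
      2 • (u ⬝ᵥ M *ᵥ u + v ⬝ᵥ M *ᵥ v) := by
  simp only [mulVec_add, mulVec_sub, add_dotProduct, sub_dotProduct, dotProduct_add,
    dotProduct_sub]
  abel

section AlgebraicConnectivity

variable {n : Type*} [Fintype n]

theorem inv_sqrt_smul_dotProduct_mulVec_self (M : Matrix n n ℝ) (w : n → ℝ) :
    ((√(w ⬝ᵥ w))⁻¹ • w) ⬝ᵥ M *ᵥ ((√(w ⬝ᵥ w))⁻¹ • w) = (w ⬝ᵥ M *ᵥ w) / (w ⬝ᵥ w) := by
  have nonneg : 0 ≤ w ⬝ᵥ w := dotProduct_star_self_nonneg w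
  rw [mulVec_smul, smul_dotProduct, dotProduct_smul, smul_smul, smul_eq_mul, ← mul_inv,
    Real.mul_self_sqrt nonneg, inv_mul_eq_div]

variable (n) in
/-- The unit vectors of `ℝⁿ` orthogonal to the all-ones vector, over which `lambda2` minimizes.
The norm is the Euclidean one, expressed through `⬝ᵥ` because `n → ℝ` carries the sup norm. -/
def unitOrthOnes : Set (n → ℝ) :=
  {v | v ⬝ᵥ v = 1 ∧ v ⬝ᵥ (fun _ => 1) = 0}

theorem isCompact_unitOrthOnes : IsCompact (unitOrthOnes n) := by
  have closed : IsClosed (unitOrthOnes n) :=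
    (isClosed_eq (by fun_prop) continuous_const).inter
      (isClosed_eq (by fun_prop) continuous_const)
  refine (isCompact_closedBall 0 1).of_isClosed_subset closed fun v ⟨hv, _⟩ => ?_
  rw [mem_closedBall_zero_iff, pi_norm_le_iff_of_nonneg zero_le_one]
  intro i
  have sq_le : v i * v i ≤ v ⬝ᵥ v :=
    Finset.single_le_sum (f := fun j => v j * v j) (fun j _ => mul_self_nonneg (v j))
      (Finset.mem_univ i)
  exact abs_le_one_iff_mul_self_le_one.2 (sq_le.trans_eq hv)

theorem inv_sqrt_smul_mem_unitOrthOnes {w : n → ℝ} (hw : w ≠ 0)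
    (hw₁ : w ⬝ᵥ (fun _ => 1) = 0) : (√(w ⬝ᵥ w))⁻¹ • w ∈ unitOrthOnes n := by
  classical
  refine ⟨?_, by rw [smul_dotProduct, hw₁, smul_zero]⟩
  have normalized := inv_sqrt_smul_dotProduct_mulVec_self 1 w
  rwa [one_mulVec, one_mulVec, div_self (dotProduct_self_eq_zero.not.2 hw)] at normalized

theorem unitOrthOnes_nonempty [Nontrivial n] : (unitOrthOnes n).Nonempty := by
  classical
  obtain ⟨i, j, hij⟩ := exists_pair_ne n
  let w : n → ℝ := Pi.single i 1 - Pi.single j 1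
  have hw : w ≠ 0 := sub_ne_zero.2 fun h => by simpa [hij] using congrFun h i
  have hw₁ : w ⬝ᵥ (fun _ => 1) = 0 := by simp [w, sub_dotProduct]
  exact ⟨_, inv_sqrt_smul_mem_unitOrthOnes hw hw₁⟩

theorem lambda2_eq_sInf_image (M : Matrix n n ℝ) :
    lambda2 M = sInf ((fun v => v ⬝ᵥ M *ᵥ v) '' unitOrthOnes n) := by
  simp only [lambda2, unitOrthOnes, Set.image, Set.mem_ofPred_eq, and_assoc, eq_comm]

theorem isCompact_image_dotProduct_mulVec_unitOrthOnes (M : Matrix n n ℝ) :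
    IsCompact ((fun v => v ⬝ᵥ M *ᵥ v) '' unitOrthOnes n) :=
  isCompact_unitOrthOnes.image (by fun_prop)

theorem exists_mem_unitOrthOnes_eq_lambda2 [Nontrivial n] (M : Matrix n n ℝ) :
    ∃ v ∈ unitOrthOnes n, v ⬝ᵥ M *ᵥ v = lambda2 M := by
  rw [lambda2_eq_sInf_image]
  exact (isCompact_image_dotProduct_mulVec_unitOrthOnes M).sInf_mem (unitOrthOnes_nonempty.image _)

theorem lambda2_mul_dotProduct_self_le_s12 (M : Matrix n n ℝ) {w : n → ℝ}
    (hw₁ : w ⬝ᵥ (fun _ => 1) = 0) : lambda2 M * (w ⬝ᵥ w) ≤ w ⬝ᵥ M *ᵥ w := by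
  rcases eq_or_ne w 0 with rfl | hw
  · simp
  have pos : 0 < w ⬝ᵥ w := dotProduct_star_self_pos_iff.2 hw
  rw [← le_div_iff₀ pos, lambda2_eq_sInf_image]
  exact csInf_le (isCompact_image_dotProduct_mulVec_unitOrthOnes M).bddBelow
    ⟨_, inv_sqrt_smul_mem_unitOrthOnes hw hw₁, inv_sqrt_smul_dotProduct_mulVec_self M w⟩

theorem lambda2_nonneg {M : Matrix n n ℝ}
    (hM : ∀ v, v ⬝ᵥ (fun _ => 1) = 0 → 0 ≤ v ⬝ᵥ M *ᵥ v) : 0 ≤ lambda2 M := by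
  refine Real.sInf_nonneg ?_
  rintro _ ⟨v, -, hv₁, rfl⟩
  exact hM v hv₁

theorem lambda2_div_two_mul_le {M : Matrix n n ℝ} (hM : 0 ≤ lambda2 M) {u v : n → ℝ}
    (hu : u ⬝ᵥ (fun _ => 1) = 0) (hv : v ⬝ᵥ (fun _ => 1) = 0) :
    lambda2 M / 2 * ((u + v) ⬝ᵥ (u + v)) ≤ u ⬝ᵥ M *ᵥ u + v ⬝ᵥ M *ᵥ v := by
  have energy_add : lambda2 M * ((u + v) ⬝ᵥ (u + v)) ≤ (u + v) ⬝ᵥ M *ᵥ (u + v) :=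
    lambda2_mul_dotProduct_self_le_s12 M (by rw [add_dotProduct, hu, hv, add_zero])
  have energy_sub : 0 ≤ (u - v) ⬝ᵥ M *ᵥ (u - v) := calc
    0 ≤ lambda2 M * ((u - v) ⬝ᵥ (u - v)) := mul_nonneg hM (dotProduct_star_self_nonneg (u - v))
    _ ≤ (u - v) ⬝ᵥ M *ᵥ (u - v) :=
      lambda2_mul_dotProduct_self_le_s12 M (by rw [sub_dotProduct, hu, hv, sub_zero])
  have parallelogram := dotProduct_mulVec_parallelogram_law M u v
  rw [two_nsmul] at parallelogram
  linarith

theorem stmt12_general [Nontrivial n] (M : Matrix n n ℝ) (hM : 0 ≤ lambda2 M) :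
    (∀ u₁ u₂ : n → ℝ, u₁ ⬝ᵥ (fun _ => 1) = 0 → u₂ ⬝ᵥ (fun _ => 1) = 0 →
      u₁ ⬝ᵥ M *ᵥ u₁ + u₂ ⬝ᵥ M *ᵥ u₂ ≥ (lambda2 M / 2) * ((u₁ + u₂) ⬝ᵥ (u₁ + u₂))) ∧
    (∃ u₁ u₂ : n → ℝ, u₁ ⬝ᵥ (fun _ => 1) = 0 ∧ u₂ ⬝ᵥ (fun _ => 1) = 0 ∧ u₁ + u₂ ≠ 0 ∧
      u₁ ⬝ᵥ M *ᵥ u₁ + u₂ ⬝ᵥ M *ᵥ u₂ = (lambda2 M / 2) * ((u₁ + u₂) ⬝ᵥ (u₁ + u₂))) := by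
  refine ⟨fun _ _ h₁ h₂ => lambda2_div_two_mul_le hM h₁ h₂, ?_⟩
  obtain ⟨v, ⟨hv, hv₁⟩, v_min⟩ := exists_mem_unitOrthOnes_eq_lambda2 M
  have norm_sq : (v + v) ⬝ᵥ (v + v) = 4 := by
    rw [add_dotProduct, dotProduct_add, hv]
    norm_num
  refine ⟨v, v, hv₁, hv₁, fun h => ?_, ?_⟩
  · simp [h] at norm_sq
  · rw [v_min, norm_sq]
    ring

end AlgebraicConnectivity

theorem stmt12 {N : ℕ} (hN : 2 ≤ N)
    (L₀ : Matrix (Fin N) (Fin N) ℝ)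
    (hL₀ : L₀.PosSemidef) (hL₀1 : L₀ *ᵥ (fun _ => 1) = 0) :
    (∀ u₁ u₂ : Fin N → ℝ, u₁ ⬝ᵥ (fun _ => 1) = 0 → u₂ ⬝ᵥ (fun _ => 1) = 0 →
      u₁ ⬝ᵥ L₀ *ᵥ u₁ + u₂ ⬝ᵥ L₀ *ᵥ u₂ ≥
        (lambda2 L₀ / 2) * ((u₁ + u₂) ⬝ᵥ (u₁ + u₂))) ∧
    (∃ u₁ u₂ : Fin N → ℝ, u₁ ⬝ᵥ (fun _ => 1) = 0 ∧ u₂ ⬝ᵥ (fun _ => 1) = 0 ∧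
      u₁ + u₂ ≠ 0 ∧
      u₁ ⬝ᵥ L₀ *ᵥ u₁ + u₂ ⬝ᵥ L₀ *ᵥ u₂ =
        (lambda2 L₀ / 2) * ((u₁ + u₂) ⬝ᵥ (u₁ + u₂))) := by
  have : Nontrivial (Fin N) := Fin.nontrivial_iff_two_le.2 hN
  exact stmt12_general L₀ (lambda2_nonneg fun v _ => hL₀.dotProduct_mulVec_nonneg v)
end

section
/- Let u₁, u₂ ∈ ℝ^N satisfy u₁ᵀ𝟙 = u₂ᵀ𝟙 = 0 and L₁u₁ = L₂u₂. Then the pair (u₁, u₂) minimizes the combined layer energy among all decompositions of u₁ + u₂: for all w₁, w₂ ∈ ℝ^N with w₁ᵀ𝟙 = w₂ᵀ𝟙 = 0 and w₁ + w₂ = u₁ + u₂, one has w₁ᵀL₁w₁ + w₂ᵀL₂w₂ ≥ u₁ᵀL₁u₁ + u₂ᵀL₂u₂. -/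
open Matrix

/-!
Write `wᵢ = uᵢ + vᵢ`, so that `∑ vᵢ = 0`. Since the vectors `Lᵢ uᵢ` all equal one vector `g`, the
cross terms of the quadratic forms add up to `(∑ vᵢ)ᴴ g + gᴴ (∑ vᵢ) = 0`. Hence the energy of `w`
exceeds that of `u` by exactly the energy of `v`, which is nonnegative.
-/

section LayerEnergy

variable {n ι R : Type*} [Fintype n] [Fintype ι]

section HermitianForm

variable [NonUnitalSemiring R] [StarRing R]

theorem star_add_dotProduct_mulVec_add {L : Matrix n n R} (hL : L.IsHermitian) (u v : n → R) :
    star (u + v) ⬝ᵥ L *ᵥ (u + v) =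
      star u ⬝ᵥ L *ᵥ u + star v ⬝ᵥ L *ᵥ v + (star v ⬝ᵥ L *ᵥ u + star (L *ᵥ u) ⬝ᵥ v) := by
  have adjoint_eq : star (L *ᵥ u) ⬝ᵥ v = star u ⬝ᵥ L *ᵥ v := by
    rw [star_mulVec, hL.eq, ← dotProduct_mulVec]
  rw [adjoint_eq, star_add, mulVec_add, add_dotProduct, dotProduct_add, dotProduct_add]
  abel

theorem sum_star_add_dotProduct_mulVec_add {L : ι → Matrix n n R} (hL : ∀ i, (L i).IsHermitian)
    {u v : ι → n → R} {g : n → R} (hu : ∀ i, L i *ᵥ u i = g) (hv : ∑ i, v i = 0) :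
    ∑ i, star (u i + v i) ⬝ᵥ L i *ᵥ (u i + v i) =
      ∑ i, star (u i) ⬝ᵥ L i *ᵥ u i + ∑ i, star (v i) ⬝ᵥ L i *ᵥ v i := by
  have cross_terms : ∑ i, (star (v i) ⬝ᵥ g + star g ⬝ᵥ v i) = 0 := by
    rw [Finset.sum_add_distrib, ← sum_dotProduct, ← dotProduct_sum, ← star_sum, hv, star_zero,
      zero_dotProduct, dotProduct_zero, add_zero]
  calc
    _ = ∑ i, (star (u i) ⬝ᵥ L i *ᵥ u i + star (v i) ⬝ᵥ L i *ᵥ v i +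
          (star (v i) ⬝ᵥ g + star g ⬝ᵥ v i)) :=
      Finset.sum_congr rfl fun i _ => by rw [star_add_dotProduct_mulVec_add (hL i), hu i]
    _ = _ := by
      rw [Finset.sum_add_distrib, cross_terms, add_zero, Finset.sum_add_distrib]

end HermitianForm

theorem stmt14_general [Ring R] [PartialOrder R] [IsOrderedAddMonoid R] [StarRing R]
    {L : ι → Matrix n n R} (hL : ∀ i, (L i).PosSemidef) {u w : ι → n → R} {g : n → R}
    (hu : ∀ i, L i *ᵥ u i = g) (hw : ∑ i, w i = ∑ i, u i) :
    ∑ i, star (u i) ⬝ᵥ L i *ᵥ u i ≤ ∑ i, star (w i) ⬝ᵥ L i *ᵥ w i := by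
  have sum_sub_eq_zero : ∑ i, (w i - u i) = 0 := by
    rw [Finset.sum_sub_distrib, hw, sub_self]
  have energy_eq := sum_star_add_dotProduct_mulVec_add (fun i => (hL i).isHermitian) hu
    sum_sub_eq_zero
  simp only [add_sub_cancel] at energy_eq
  rw [energy_eq]
  exact le_add_of_nonneg_right (Finset.sum_nonneg fun i _ => (hL i).dotProduct_mulVec_nonneg _)

end LayerEnergy

theorem stmt14 {N : ℕ} (hN : 1 ≤ N)
    (L₁ L₂ : Matrix (Fin N) (Fin N) ℝ)
    (hL₁ : L₁.PosSemidef) (hL₂ : L₂.PosSemidef)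
    (hL₁1 : L₁ *ᵥ (fun _ => 1) = 0) (hL₂1 : L₂ *ᵥ (fun _ => 1) = 0)
    (u₁ u₂ : Fin N → ℝ)
    (hu₁ : u₁ ⬝ᵥ (fun _ => 1) = 0) (hu₂ : u₂ ⬝ᵥ (fun _ => 1) = 0)
    (hstat : L₁ *ᵥ u₁ = L₂ *ᵥ u₂) :
    ∀ w₁ w₂ : Fin N → ℝ, w₁ ⬝ᵥ (fun _ => 1) = 0 → w₂ ⬝ᵥ (fun _ => 1) = 0 →
      w₁ + w₂ = u₁ + u₂ →
      w₁ ⬝ᵥ L₁ *ᵥ w₁ + w₂ ⬝ᵥ L₂ *ᵥ w₂ ≥ u₁ ⬝ᵥ L₁ *ᵥ u₁ + u₂ ⬝ᵥ L₂ *ᵥ u₂ := by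
  intro w₁ w₂ _ _ hw
  simpa [Fin.sum_univ_two] using stmt14_general (L := ![L₁, L₂]) (u := ![u₁, u₂])
    (w := ![w₁, w₂]) (g := L₂ *ᵥ u₂) (Fin.forall_fin_two.2 ⟨hL₁, hL₂⟩)
    (Fin.forall_fin_two.2 ⟨hstat, rfl⟩) (by simpa [Fin.sum_univ_two] using hw)
end
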